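/- Let m and F be positive integers with m < F < 2m. Then 𝓡(F,m) = { A ∪ {0, m} ∪ {n ∈ ℕ : n ≥ F+1} : A ⊆ {m+1, m+2, …, F−1} }. -/

import Mathlib

/-!
Every numerical semigroup with multiplicity `m` and Frobenius number `F` contains `0`, `m` and all
integers above `F`, misses `F`, and has no other element below `m`; so it is determined by its
elements strictly between `m` and `F`. Conversely these elements are arbitrary: two nonzero
elements of `A ∪ {0, m} ∪ {F + 1, →}` are both at least `m`, so their sum is at least `2 * m > F`
and closure under addition is automatic.
-/

/-- A numerical semigroup: a submonoid of (ℕ,+) with finite complement. -/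
def IsNumericalSemigroup (S : Set ℕ) : Prop :=
  0 ∈ S ∧ (∀ a ∈ S, ∀ b ∈ S, a + b ∈ S) ∧ Sᶜ.Finite

/-- The multiplicity m(S): least positive element of S. -/
noncomputable def mult (S : Set ℕ) : ℕ := sInf {s | s ∈ S ∧ s ≠ 0}

/-- The ratio r(S): least s ∈ S not divisible by the multiplicity. -/
noncomputable def ratio (S : Set ℕ) : ℕ := sInf {s | s ∈ S ∧ ¬ mult S ∣ s}

/-- The Frobenius number F(S): largest integer not in S. -/
noncomputable def frob (S : Set ℕ) : ℕ := sSup Sᶜ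

/-- The genus g(S): number of gaps of S. -/
noncomputable def genus (S : Set ℕ) : ℕ := Sᶜ.ncard

/-- Pseudo-Frobenius numbers of S. -/
def PF (S : Set ℕ) : Set ℕ := {x | x ∉ S ∧ ∀ s ∈ S, s ≠ 0 → x + s ∈ S}

/-- Special gaps of S. -/
def SG (S : Set ℕ) : Set ℕ := {x | x ∈ PF S ∧ 2 * x ∈ S}

/-- The Apéry set of n in S: elements s of S with s - n ∉ S (as integers). -/
def Ap (S : Set ℕ) (n : ℕ) : Set ℕ := {s | s ∈ S ∧ ¬ ∃ t ∈ S, t + n = s}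

/-- The minimal system of generators of a numerical semigroup:
    nonzero elements not expressible as a sum of two nonzero elements. -/
def msg (S : Set ℕ) : Set ℕ :=
  {x | x ∈ S ∧ x ≠ 0 ∧ ∀ a ∈ S, ∀ b ∈ S, a ≠ 0 → b ≠ 0 → x ≠ a + b}

/-- The embedding dimension e(S). -/
noncomputable def edim (S : Set ℕ) : ℕ := (msg S).ncard

/-- The submonoid of ℕ generated by a set A. -/
def closureSet (A : Set ℕ) : Set ℕ := (AddSubmonoid.closure A : Set ℕ)

/-- M is the minimum of the family R with respect to inclusion. -/
def IsMinOf (R : Set (Set ℕ)) (M : Set ℕ) : Prop := M ∈ R ∧ ∀ S ∈ R, M ⊆ S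

/-- A ratio-covariety. -/
def IsRatioCovariety (R : Set (Set ℕ)) : Prop :=
  R.Nonempty ∧ (∀ S ∈ R, IsNumericalSemigroup S) ∧
  (∃ M, IsMinOf R M) ∧
  (∀ S ∈ R, ∀ T ∈ R, S ∩ T ∈ R) ∧
  (∀ S ∈ R, ∀ M, IsMinOf R M → S ≠ M → S \ {ratio S} ∈ R)

/-- The family 𝓡(F,m) of numerical semigroups with Frobenius number F and multiplicity m. -/
def RFm (F m : ℕ) : Set (Set ℕ) :=
  {S | IsNumericalSemigroup S ∧ frob S = F ∧ mult S = m}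

/-- Δ(F,m) = ⟨m⟩ ∪ {F+1, →}. -/
def Delta (F m : ℕ) : Set ℕ := {n | m ∣ n} ∪ {n | F < n}

/-- X is an 𝓡-set: disjoint from min(𝓡) and contained in some element of 𝓡. -/
def IsRSet (R : Set (Set ℕ)) (X : Set ℕ) : Prop :=
  (∀ M, IsMinOf R M → X ∩ M = ∅) ∧ ∃ S ∈ R, X ⊆ S

/-- 𝓡[X]: the intersection of all elements of 𝓡 containing X. -/
def RGen (R : Set (Set ℕ)) (X : Set ℕ) : Set ℕ := ⋂₀ {S | S ∈ R ∧ X ⊆ S}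

/-- The 𝓡-rank of S. -/
noncomputable def Rrank (R : Set (Set ℕ)) (S : Set ℕ) : ℕ :=
  sInf {n | ∃ X, IsRSet R X ∧ RGen R X = S ∧ X.ncard = n}

theorem RFm_of_F_lt_two_mul (m F : ℕ) (hm : 0 < m) (hmF : m < F) (hF2m : F < 2 * m) :
    RFm F m = {T | ∃ A ⊆ Set.Icc (m + 1) (F - 1), T = A ∪ {0, m} ∪ {n | F + 1 ≤ n}} := by
  ext S
  constructor
  · rintro ⟨⟨h0, -, hfin⟩, hF, hM⟩
    -- `sSup ∅ = 0` in `ℕ`, so `0 < F` is what rules out `S = ℕ`.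
    have hne : Sᶜ.Nonempty := by
      by_contra h
      rw [Set.not_nonempty_iff_eq_empty] at h
      simp [frob, h] at hF
      omega
    have hFS : F ∉ S := hF ▸ Nat.sSup_mem hne hfin.bddAbove
    have hgt : ∀ n, F < n → n ∈ S := by
      intro n hn
      by_contra h
      have : n ≤ frob S := le_csSup hfin.bddAbove h
      omega
    have hmS : m ∈ S := by
      have : mult S ∈ {s | s ∈ S ∧ s ≠ 0} :=
        Nat.sInf_mem ⟨F + 1, hgt _ (by omega), by omega⟩
      exact hM ▸ this.1
    have hge : ∀ n ∈ S, n ≠ 0 → m ≤ n := fun n hn h => hM ▸ Nat.sInf_le ⟨hn, h⟩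
    refine ⟨S ∩ Set.Icc (m + 1) (F - 1), Set.inter_subset_right, ?_⟩
    ext n
    simp only [Set.mem_union, Set.mem_inter_iff, Set.mem_Icc, Set.mem_insert_iff,
      Set.mem_singleton_iff, Set.mem_ofPred_eq]
    constructor
    · intro hn
      have h1 := hge n hn
      have h2 : n ≠ F := fun h => hFS (h ▸ hn)
      have h3 : n ∈ S := hn
      simp only [h3, true_and]
      omega
    · rintro ((h | rfl | rfl) | h)
      · exact h.1
      · exact h0
      · exact hmS
      · exact hgt n h
  · rintro ⟨A, hA, rfl⟩
    have hA' : ∀ n ∈ A, m + 1 ≤ n ∧ n ≤ F - 1 := fun n hn => hA hn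
    set T : Set ℕ := A ∪ {0, m} ∪ {n | F + 1 ≤ n}
    have hmem : ∀ n, n ∈ T ↔ (n ∈ A ∨ n = 0 ∨ n = m) ∨ F + 1 ≤ n := fun n => Iff.rfl
    have hge : ∀ n ∈ T, n ≠ 0 → m ≤ n := by
      intro n hn h
      rcases (hmem n).1 hn with (h1 | h1 | h1) | h1
      · have := hA' n h1
        omega
      all_goals omega
    have hub : ∀ n ∈ Tᶜ, n ≤ F := by
      intro n hn
      by_contra h
      exact hn ((hmem n).2 (Or.inr (by omega)))
    have hFT : F ∉ T := by
      intro h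
      rcases (hmem F).1 h with (h1 | h1 | h1) | h1
      · have := hA' F h1
        omega
      all_goals omega
    have hmT : m ∈ T := (hmem m).2 (Or.inl (Or.inr (Or.inr rfl)))
    refine ⟨⟨(hmem 0).2 (Or.inl (Or.inr (Or.inl rfl))), ?_, (Set.finite_Iic F).subset hub⟩, ?_, ?_⟩
    · intro a ha b hb
      rcases eq_or_ne a 0 with rfl | ha0
      · simpa using hb
      rcases eq_or_ne b 0 with rfl | hb0
      · simpa using ha
      have h1 := hge a ha ha0
      have h2 := hge b hb hb0
      exact (hmem _).2 (Or.inr (by omega))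
    · exact IsGreatest.csSup_eq ⟨hFT, hub⟩
    · exact IsLeast.csInf_eq ⟨⟨hmT, by omega⟩, fun n hn => hge n hn.1 hn.2⟩
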